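/- Let D be a cone metric on X, d the induced real-valued function, T : X → X a map, β ∈ (0,1), and x,y ∈ X. If there exists u ∈ {D(x,y), (1/2)·(D(x,Tx) + D(y,Ty)), (1/2)·(D(x,Ty) + D(y,Tx))} such that D(Tx,Ty) ≤ β·u, then d(Tx,Ty) ≤ β·max{d(x,y), (1/2)·(d(x,Tx) + d(y,Ty)), (1/2)·(d(x,Ty) + d(y,Tx))}. -/

import Mathlib

/-!
The induced function `d` is monotone and sublinear in `D`: if `D p q ≤ a • D r s + b • D r' s'`
with `a, b ≥ 0`, then for any majorants `u` of `D r s` and `v` of `D r' s'` the vector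
`a • u + b • v` majorizes `D p q` and has norm at most `a ‖u‖ + b ‖v‖`; taking infima gives
`d p q ≤ a * d r s + b * d r' s'`. Each of the three choices of the bounding vector is an instance
of this, with `(a, b)` equal to `(β, 0)` or `(β / 2, β / 2)`.
-/

open Filter Topology

/-- A cone in a real Banach space `E`. -/
structure IsCone (E : Type*) [NormedAddCommGroup E] [NormedSpace ℝ E] (P : Set E) : Prop where
  closed : IsClosed P
  nonempty : P.Nonempty
  ne_singleton_zero : P ≠ {0}
  combo_mem : ∀ a b : ℝ, 0 ≤ a → 0 ≤ b → ∀ x y : E, x ∈ P → y ∈ P → a • x + b • y ∈ P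
  eq_zero_of_mem_of_neg_mem : ∀ x : E, x ∈ P → -x ∈ P → x = 0

/-- `x ≤ y` with respect to the cone `P`, i.e. `y - x ∈ P`. -/
def coneLe {E : Type*} [NormedAddCommGroup E] (P : Set E) (x y : E) : Prop :=
  y - x ∈ P

/-- `x ≪ y` with respect to the cone `P`, i.e. `y - x ∈ interior P`. -/
def coneLt {E : Type*} [NormedAddCommGroup E] (P : Set E) (x y : E) : Prop :=
  y - x ∈ interior P

/-- `D : X × X → E` is a cone metric with respect to the cone `P`. -/
structure IsConeMetric {E : Type*} [NormedAddCommGroup E] (P : Set E)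
    {X : Type*} (D : X → X → E) : Prop where
  nonneg : ∀ x y : X, coneLe P 0 (D x y)
  eq_zero_iff : ∀ x y : X, (D x y = 0 ↔ x = y)
  symm : ∀ x y : X, D x y = D y x
  triangle : ∀ x y z : X, coneLe P (D x y) (D x z + D z y)

/-- The induced real-valued function `d(x,y) = inf {‖u‖ : D x y ≤ u}`. -/
noncomputable def inducedDist {E : Type*} [NormedAddCommGroup E] (P : Set E)
    {X : Type*} (D : X → X → E) (x y : X) : ℝ :=
  sInf {r : ℝ | ∃ u : E, r = ‖u‖ ∧ coneLe P (D x y) u}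

theorem inducedDist_le_norm {E X : Type*} [NormedAddCommGroup E] {P : Set E} {D : X → X → E}
    {p q : X} {u : E} (hu : coneLe P (D p q) u) : inducedDist P D p q ≤ ‖u‖ := by
  refine csInf_le ⟨0, ?_⟩ ⟨u, rfl, hu⟩
  rintro _ ⟨w, rfl, -⟩
  exact norm_nonneg w

theorem exists_norm_lt_inducedDist_add {E X : Type*} [NormedAddCommGroup E] [NormedSpace ℝ E]
    {P : Set E} (hP : IsCone E P) (D : X → X → E) (p q : X) {ε : ℝ} (hε : 0 < ε) :
    ∃ u, coneLe P (D p q) u ∧ ‖u‖ < inducedDist P D p q + ε := by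
  -- `D p q` majorizes itself, so the infimum is over a nonempty set.
  have h0 : coneLe P (D p q) (D p q) := by
    obtain ⟨z, hz⟩ := hP.nonempty
    simpa [coneLe] using hP.combo_mem 0 0 le_rfl le_rfl z z hz hz
  obtain ⟨_, ⟨u, rfl, hu⟩, hlt⟩ := exists_lt_of_csInf_lt
    (s := {r : ℝ | ∃ u : E, r = ‖u‖ ∧ coneLe P (D p q) u})
    ⟨_, D p q, rfl, h0⟩ (lt_add_of_pos_right (inducedDist P D p q) hε)
  exact ⟨u, hu, hlt⟩

/-- Monotonicity and sublinearity of the induced function with respect to the cone metric. -/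
theorem inducedDist_le_of_coneLe_combo {E X : Type*} [NormedAddCommGroup E] [NormedSpace ℝ E]
    {P : Set E} (hP : IsCone E P) {D : X → X → E} {p q r s r' s' : X} {a b : ℝ}
    (ha : 0 ≤ a) (hb : 0 ≤ b) (h : coneLe P (D p q) (a • D r s + b • D r' s')) :
    inducedDist P D p q ≤ a * inducedDist P D r s + b * inducedDist P D r' s' := by
  refine le_of_forall_pos_le_add fun ε hε => ?_
  -- Approximating both infima within `δ` costs `(a + b) * δ ≤ ε` in total.
  have hab : 0 < a + b + 1 := by positivity
  set δ := ε / (a + b + 1) with hδ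
  have hδ0 : 0 < δ := div_pos hε hab
  have hδε : (a + b + 1) * δ = ε := mul_div_cancel₀ ε hab.ne'
  obtain ⟨u, hu, hun⟩ := exists_norm_lt_inducedDist_add hP D r s hδ0
  obtain ⟨v, hv, hvn⟩ := exists_norm_lt_inducedDist_add hP D r' s' hδ0
  have huv : coneLe P (D p q) (a • u + b • v) := by
    have h1 := hP.combo_mem 1 1 zero_le_one zero_le_one _ _ h (hP.combo_mem a b ha hb _ _ hu hv)
    unfold coneLe
    convert h1 using 1
    module
  calc inducedDist P D p q ≤ ‖a • u + b • v‖ := inducedDist_le_norm huv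
    _ ≤ a * ‖u‖ + b * ‖v‖ := by
      refine (norm_add_le _ _).trans_eq ?_
      rw [norm_smul_of_nonneg ha, norm_smul_of_nonneg hb]
    _ ≤ a * (inducedDist P D r s + δ) + b * (inducedDist P D r' s' + δ) := by gcongr
    _ ≤ a * inducedDist P D r s + b * inducedDist P D r' s' + ε := by linarith

theorem stmt16 {E X : Type*} [NormedAddCommGroup E] [NormedSpace ℝ E] [CompleteSpace E]
    [Nonempty X] (P : Set E) (hP : IsCone E P) (hPint : (interior P).Nonempty)
    (D : X → X → E) (hD : IsConeMetric P D) (T : X → X) (β : ℝ) (hβ0 : 0 < β) (hβ1 : β < 1)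
    (x y : X)
    (h : ∃ u ∈ ({D x y, (1 / 2 : ℝ) • (D x (T x) + D y (T y)),
        (1 / 2 : ℝ) • (D x (T y) + D y (T x))} : Set E),
      coneLe P (D (T x) (T y)) (β • u)) :
    inducedDist P D (T x) (T y) ≤
      β * max (inducedDist P D x y)
        (max ((1 / 2) * (inducedDist P D x (T x) + inducedDist P D y (T y)))
          ((1 / 2) * (inducedDist P D x (T y) + inducedDist P D y (T x)))) := by
  have hβ2 : 0 ≤ β / 2 := by positivity
  have half : ∀ v w : E, β • (1 / 2 : ℝ) • (v + w) = (β / 2) • v + (β / 2) • w := by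
    intro v w
    module
  obtain ⟨u, rfl | rfl | rfl, hu⟩ := h
  · have key := inducedDist_le_of_coneLe_combo (r := x) (s := y) (r' := x) (s' := y) hP hβ0.le
      le_rfl (by simpa using hu)
    refine key.trans ?_
    rw [zero_mul, add_zero]
    exact mul_le_mul_of_nonneg_left (le_max_left _ _) hβ0.le
  · rw [half] at hu
    refine (inducedDist_le_of_coneLe_combo hP hβ2 hβ2 hu).trans ?_
    refine le_trans (le_of_eq ?_) (mul_le_mul_of_nonneg_left
      ((le_max_left _ _).trans (le_max_right _ _)) hβ0.le)
    ring
  · rw [half] at hu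
    refine (inducedDist_le_of_coneLe_combo hP hβ2 hβ2 hu).trans ?_
    refine le_trans (le_of_eq ?_) (mul_le_mul_of_nonneg_left
      ((le_max_right _ _).trans (le_max_right _ _)) hβ0.le)
    ring
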